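/- arXiv:2201.09859 — 2 statements merged into one kernel-verified Lean document; each statement's English description precedes it below -/
import Mathlib

section
/- Let m, F, G, K be positive integers, H an m×m real matrix (graph shift operator), Y an m×F real matrix (graph signal), and Ψ_k ∈ ℝ^{F×G} for k = 0,…,K−1 a family of filter taps. For any permutation σ of Fin m with permutation matrix P_σ, the graph convolution of the permuted data equals the permutation of the original graph convolution: Σ_{k=0}^{K−1} (P_σ H P_σᵀ)^k (P_σ Y) Ψ_k = P_σ (Σ_{k=0}^{K−1} H^k Y Ψ_k). -/
open Matrix

/-- The permutation matrix of `σ`: entry `(i, j)` is `1` if `j = σ i` and `0` otherwise. -/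
def permMat {m : ℕ} (σ : Equiv.Perm (Fin m)) : Matrix (Fin m) (Fin m) ℝ :=
  fun i j => if j = σ i then 1 else 0

theorem permMat_eq_permMatrix {m : ℕ} (σ : Equiv.Perm (Fin m)) : permMat σ = σ.permMatrix ℝ := by
  ext i j
  simp [permMat, PEquiv.toMatrix_apply, eq_comm]

theorem transpose_permMat_mul_self {m : ℕ} (σ : Equiv.Perm (Fin m)) :
    (permMat σ)ᵀ * permMat σ = 1 := by
  rw [permMat_eq_permMatrix, transpose_permMatrix, ← permMatrix_mul, mul_inv_cancel,
    permMatrix_one]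

section Intertwining

variable {R m n f g : Type*} [Semiring R] [Fintype m] [Fintype n]

theorem matrix_mul_eq_conj_mul_of_mul_eq_one [DecidableEq n] {P : Matrix m n R}
    {Q : Matrix n m R} (hQP : Q * P = 1) (H : Matrix n n R) : P * H = P * H * Q * P := by
  rw [Matrix.mul_assoc _ Q, hQP, Matrix.mul_one]

variable [DecidableEq m] [DecidableEq n] [Fintype f]

theorem matrix_mul_pow_eq_pow_mul {P : Matrix m n R} {H : Matrix n n R} {H' : Matrix m m R}
    (h : P * H = H' * P) (k : ℕ) : P * H ^ k = H' ^ k * P := by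
  induction k with
  | zero => rw [pow_zero, pow_zero, Matrix.mul_one, Matrix.one_mul]
  | succ k ih =>
    calc P * H ^ (k + 1) = P * H ^ k * H := by rw [pow_succ, Matrix.mul_assoc]
      _ = H' ^ k * (P * H) := by rw [ih, Matrix.mul_assoc]
      _ = H' ^ (k + 1) * P := by rw [h, pow_succ, Matrix.mul_assoc]

/-- The graph convolution with `K` filter taps `Ψ 0, …, Ψ (K - 1)` of the signal `Y`, for the shift
operator `H`. The taps are indexed by all of `ℕ`; those from `K` on are ignored. -/
def graphConv (K : ℕ) (H : Matrix n n R) (Y : Matrix n f R) (Ψ : ℕ → Matrix f g R) :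
    Matrix n g R :=
  ∑ k ∈ Finset.range K, H ^ k * Y * Ψ k

/-- The taps act on the right, so only the powers of the shift have to be moved past `P`. -/
theorem graphConv_perm_equivariant_general {P : Matrix m n R} {H : Matrix n n R}
    {H' : Matrix m m R} (h : P * H = H' * P) (K : ℕ) (Y : Matrix n f R)
    (Ψ : ℕ → Matrix f g R) : graphConv K H' (P * Y) Ψ = P * graphConv K H Y Ψ := by
  rw [graphConv, graphConv, Matrix.mul_sum]
  refine Finset.sum_congr rfl fun k _ => ?_
  calc H' ^ k * (P * Y) * Ψ k = H' ^ k * P * Y * Ψ k := by rw [Matrix.mul_assoc _ P]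
    _ = P * H ^ k * Y * Ψ k := by rw [matrix_mul_pow_eq_pow_mul h]
    _ = P * (H ^ k * Y * Ψ k) := by simp only [Matrix.mul_assoc]

end Intertwining

/-- Permutation equivariance of the graph convolution: for a graph shift operator `H`,
a graph signal `Y` and filter taps `Ψ k`, `k = 0, …, K-1`,
`Σ_{k<K} (P_σ H P_σᵀ)^k (P_σ Y) Ψ_k = P_σ (Σ_{k<K} H^k Y Ψ_k)`. -/
theorem graphConv_perm_equivariant {m F G K : ℕ} (hm : 0 < m) (hF : 0 < F) (hG : 0 < G)
    (hK : 0 < K) (H : Matrix (Fin m) (Fin m) ℝ) (Y : Matrix (Fin m) (Fin F) ℝ)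
    (Ψ : ℕ → Matrix (Fin F) (Fin G) ℝ) (σ : Equiv.Perm (Fin m)) :
    ∑ k ∈ Finset.range K, (permMat σ * H * (permMat σ)ᵀ) ^ k * (permMat σ * Y) * Ψ k
      = permMat σ * ∑ k ∈ Finset.range K, H ^ k * Y * Ψ k :=
  graphConv_perm_equivariant_general
    (matrix_mul_eq_conj_mul_of_mul_eq_one (transpose_permMat_mul_self σ) H) K Y Ψ
end

section
/- (Deterministic form of Theorem 1: a parameter is optimal for a wireless control system if and only if it is optimal for its permutation.) Let m, p, r, T be positive integers, σ a permutation of Fin m, γ ∈ ℝ, and Θ an arbitrary type of policy parameters. Let α : Θ → (ℝ^p)^m × ℝ^{m×m} → ℝ^m be a parametrized policy family with α(θ)(x ∘ σ, H^σ) = α(θ)(x, H) ∘ σ for all θ, x, H; let F : (ℝ^p)^m × ℝ^m × ℝ^{m×m} → (ℝ^p)^m satisfy F(x ∘ σ, a ∘ σ, H^σ) = F(x, a, H) ∘ σ; and let c : (ℝ^p)^m → ℝ and l : ℝ^m → ℝ^r satisfy c(x ∘ σ) = c(x) and l(a ∘ σ) = l(a). Fix x_0 ∈ (ℝ^p)^m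 and a sequence H_t ∈ ℝ^{m×m}. For each θ define the trajectory x_t^θ by x_0^θ = x_0, x_{t+1}^θ = F(x_t^θ, α(θ)(x_t^θ, H_t), H_t), and set J(θ) = Σ_{t=0}^{T} γ^t c(x_t^θ), L(θ) = Σ_{t=0}^{T} γ^t l(α(θ)(x_t^θ, H_t)); define Ĵ(θ) and L̂(θ) identically but with initial state x_0 ∘ σ and network states H_t^σ. Then θ* satisfies L(θ*) ≤ 0 componentwise and J(θ*) ≤ J(θ) for every θ with L(θ) ≤ 0, if and only if θ* satisfies L̂(θ*) ≤ 0 and Ĵ(θ*) ≤ Ĵ(θ) for every θ with L̂(θ) ≤ 0. -/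
/-- The closed-loop trajectory of a wireless control system: starting from `x0`,
`x_{t+1} = F(x_t, α(x_t, H_t), H_t)`. -/
def traj {X A Hm : Type*} (F : X → A → Hm → X) (α : X → Hm → A) (H : ℕ → Hm)
    (x0 : X) : ℕ → X
  | 0 => x0
  | t + 1 => F (traj F α H x0 t) (α (traj F α H x0 t) (H t)) (H t)

section Semiconjugacy

variable {X A N X' A' N' R E V Θ : Type*}
  {f : X → X'} {g : A → A'} {k : N → N'}
  {F : X → A → N → X} {F' : X' → A' → N' → X'} {α : X → N → A} {α' : X' → N' → A'}

theorem traj_semiconj (hF : ∀ x a h, F' (f x) (g a) (k h) = f (F x a h))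
    (hα : ∀ x h, α' (f x) (k h) = g (α x h)) (H : ℕ → N) (x₀ : X) (t : ℕ) :
    traj F' α' (fun s => k (H s)) (f x₀) t = f (traj F α H x₀ t) := by
  induction t with
  | zero => rfl
  | succ t ih => simp only [traj, ih, hα, hF]

/-- The finite-horizon discounted total `∑_{t=0}^{T} γ^t φ(x_t, α(x_t, H_t), H_t)` along the
closed-loop trajectory. The stage function `φ` is vector-valued, so that both the cost `J` and the
constraint `L` of a resource allocation problem are of this form. -/
def discountedTotal [Semiring R] [AddCommMonoid E] [Module R E]
    (γ : R) (T : ℕ) (φ : X → A → N → E) (F : X → A → N → X) (α : X → N → A)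
    (H : ℕ → N) (x₀ : X) : E :=
  ∑ t ∈ Finset.range (T + 1),
    γ ^ t • φ (traj F α H x₀ t) (α (traj F α H x₀ t) (H t)) (H t)

theorem discountedTotal_semiconj [Semiring R] [AddCommMonoid E] [Module R E]
    {φ : X → A → N → E} {φ' : X' → A' → N' → E}
    (hF : ∀ x a h, F' (f x) (g a) (k h) = f (F x a h))
    (hα : ∀ x h, α' (f x) (k h) = g (α x h)) (hφ : ∀ x a h, φ' (f x) (g a) (k h) = φ x a h)
    (γ : R) (T : ℕ) (H : ℕ → N) (x₀ : X) :
    discountedTotal γ T φ' F' α' (fun t => k (H t)) (f x₀) =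
      discountedTotal γ T φ F α H x₀ := by
  simp only [discountedTotal, traj_semiconj hF hα, hα, hφ]

/-- `θ` solves the constrained problem of minimizing `J` subject to `L ≤ 0`: it is feasible, and
its cost is at most that of every feasible parameter. -/
def IsOptimal [Preorder V] [Preorder E] [Zero E] (J : Θ → V) (L : Θ → E) (θ : Θ) : Prop :=
  L θ ≤ 0 ∧ ∀ θ' : Θ, L θ' ≤ 0 → J θ ≤ J θ'

theorem optimal_iff_optimal_permuted_general [Semiring R] [AddCommMonoid V] [Module R V]
    [Preorder V] [AddCommMonoid E] [Module R E] [Preorder E]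
    (f : X → X') (g : A → A') (k : N → N') {α : Θ → X → N → A} {α' : Θ → X' → N' → A'}
    {c : X → A → N → V} {c' : X' → A' → N' → V} {l : X → A → N → E} {l' : X' → A' → N' → E}
    (hα : ∀ θ x h, α' θ (f x) (k h) = g (α θ x h))
    (hF : ∀ x a h, F' (f x) (g a) (k h) = f (F x a h))
    (hc : ∀ x a h, c' (f x) (g a) (k h) = c x a h)
    (hl : ∀ x a h, l' (f x) (g a) (k h) = l x a h)
    (γ : R) (T : ℕ) (H : ℕ → N) (x₀ : X) (θ : Θ) :
    IsOptimal (fun θ => discountedTotal γ T c F (α θ) H x₀)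
        (fun θ => discountedTotal γ T l F (α θ) H x₀) θ ↔
      IsOptimal (fun θ => discountedTotal γ T c' F' (α' θ) (fun t => k (H t)) (f x₀))
        (fun θ => discountedTotal γ T l' F' (α' θ) (fun t => k (H t)) (f x₀)) θ := by
  simp only [discountedTotal_semiconj hF (hα _) hc, discountedTotal_semiconj hF (hα _) hl]

end Semiconjugacy

/-- Deterministic form of Theorem 1: for a permutation-equivariant parametrized policy
family `α`, a permutation-equivariant transition map `F`, and permutation-invariant
cost `c` and constraint `l`, a parameter `θ*` is optimal (feasible and cost-minimizing
among feasible parameters) for the system with initial state `x0` and network states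
`H_t` if and only if it is optimal for the permuted system with initial state `x0 ∘ σ`
and network states `H_t^σ`. -/
theorem optimal_iff_optimal_permuted {m p r T : ℕ}
    (hm : 0 < m) (hp : 0 < p) (hr : 0 < r) (hT : 0 < T)
    (σ : Equiv.Perm (Fin m)) (γ : ℝ) (Θ : Type*)
    (α : Θ → (Fin m → (Fin p → ℝ)) → Matrix (Fin m) (Fin m) ℝ → (Fin m → ℝ))
    (F : (Fin m → (Fin p → ℝ)) → (Fin m → ℝ) → Matrix (Fin m) (Fin m) ℝ →
      (Fin m → (Fin p → ℝ)))
    (hα : ∀ (θ : Θ) (x : Fin m → (Fin p → ℝ)) (H : Matrix (Fin m) (Fin m) ℝ),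
      α θ (fun i => x (σ i)) (fun i j => H (σ i) (σ j)) = fun i => α θ x H (σ i))
    (hF : ∀ (x : Fin m → (Fin p → ℝ)) (a : Fin m → ℝ) (H : Matrix (Fin m) (Fin m) ℝ),
      F (fun i => x (σ i)) (fun i => a (σ i)) (fun i j => H (σ i) (σ j))
        = fun i => F x a H (σ i))
    (c : (Fin m → (Fin p → ℝ)) → ℝ) (l : (Fin m → ℝ) → (Fin r → ℝ))
    (hc : ∀ x : Fin m → (Fin p → ℝ), c (fun i => x (σ i)) = c x)
    (hl : ∀ a : Fin m → ℝ, l (fun i => a (σ i)) = l a)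
    (x0 : Fin m → (Fin p → ℝ)) (H : ℕ → Matrix (Fin m) (Fin m) ℝ)
    (J : Θ → ℝ) (L : Θ → (Fin r → ℝ)) (Jhat : Θ → ℝ) (Lhat : Θ → (Fin r → ℝ))
    (hJ : ∀ θ, J θ = ∑ t ∈ Finset.range (T + 1),
      γ ^ t * c (traj F (α θ) H x0 t))
    (hL : ∀ θ, L θ = ∑ t ∈ Finset.range (T + 1),
      γ ^ t • l (α θ (traj F (α θ) H x0 t) (H t)))
    (hJhat : ∀ θ, Jhat θ = ∑ t ∈ Finset.range (T + 1),
      γ ^ t * c (traj F (α θ) (fun t => fun i j => H t (σ i) (σ j)) (fun i => x0 (σ i)) t))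
    (hLhat : ∀ θ, Lhat θ = ∑ t ∈ Finset.range (T + 1),
      γ ^ t • l (α θ
        (traj F (α θ) (fun t => fun i j => H t (σ i) (σ j)) (fun i => x0 (σ i)) t)
        (fun i j => H t (σ i) (σ j))))
    (θstar : Θ) :
    (L θstar ≤ 0 ∧ ∀ θ : Θ, L θ ≤ 0 → J θstar ≤ J θ)
      ↔ (Lhat θstar ≤ 0 ∧ ∀ θ : Θ, Lhat θ ≤ 0 → Jhat θstar ≤ Jhat θ) := by
  simp only [hJ, hL, hJhat, hLhat]
  exact optimal_iff_optimal_permuted_general (fun x i => x (σ i)) (fun a i => a (σ i))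
    (fun H i j => H (σ i) (σ j)) (c := fun x _ _ => c x) (c' := fun x _ _ => c x)
    (l := fun _ a _ => l a) (l' := fun _ a _ => l a)
    hα hF (fun x _ _ => hc x) (fun _ a _ => hl a) γ T H x0 θstar
end
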